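/- arXiv:2105.08558 — 2 statements merged into one kernel-verified Lean document; each statement's English description precedes it below -/
import Mathlib

section
/- Let ℓ > 0 and let α : [0, ℓ/4] → ℝ³ be continuously differentiable. Then the ℓ-periodic extension g of the glued map is continuously differentiable on all of ℝ if and only if α(0) ∈ ℝe₃, α(ℓ/4) ∈ ℝe₁, α'(0) ∈ span{e₁, e₂}, and α'(ℓ/4) ∈ span{e₂, e₃}. -/
/-! Write `g` for the glued curve. Since `R₂R₁ = R₃`, it satisfies `g (t + ℓ/2) = R₂ (g t)` for
every arc `α`, and `R₂` is invertible; so smoothness needs to be tested on one half-period only,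
hence only at the junctions `0` and `ℓ/4`. There `g` continues the arc by its image under `R = R₃`,
respectively `R = R₁`, with time reversed, so values and one-sided derivatives match exactly when
`R` fixes the end point of `α` and negates its end velocity: the end point lies on the axis of `R`
and the velocity is orthogonal to it. -/

noncomputable section

open Real Set

/-- Euclidean three-space. -/
abbrev E3 : Type := EuclideanSpace ℝ (Fin 3)

/-- The vector (a,b,c) ∈ ℝ³ (with the Euclidean norm). -/
def vec3 (a b c : ℝ) : E3 := (WithLp.equiv 2 (Fin 3 → ℝ)).symm ![a, b, c]

/-- The standard basis vectors. -/
def e1 : E3 := vec3 1 0 0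
def e2 : E3 := vec3 0 1 0
def e3 : E3 := vec3 0 0 1

/-- The rotations `R₁, R₂, R₃` by angle π about the coordinate axes `ℝe₁, ℝe₂, ℝe₃`
(indexed by `0, 1, 2 : Fin 3`). -/
def Rot : Fin 3 → E3 → E3 :=
  ![fun x => vec3 (x 0) (-x 1) (-x 2),
    fun x => vec3 (-x 0) (x 1) (-x 2),
    fun x => vec3 (-x 0) (-x 1) (x 2)]

/-- The dihedral parameter transformations `ψ₁^ℓ(t) = ℓ/2 - t`, `ψ₂^ℓ(t) = t - ℓ/2`,
`ψ₃^ℓ(t) = ℓ - t` (indexed by `0, 1, 2 : Fin 3`). -/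
def psi (ℓ : ℝ) : Fin 3 → ℝ → ℝ :=
  ![fun t => ℓ / 2 - t, fun t => t - ℓ / 2, fun t => ℓ - t]

/-- An `ℓ`-periodic curve `γ : ℝ → ℝ³` is D₂-symmetric if `Rᵢ(γ(ψᵢ^ℓ(t))) = γ(t)`
for all `t ∈ ℝ` and `i = 1,2,3`. -/
def DihedralSymmetric (ℓ : ℝ) (γ : ℝ → E3) : Prop :=
  ∀ i : Fin 3, ∀ t : ℝ, Rot i (γ (psi ℓ i t)) = γ t

/-- The `ℓ`-periodic extension of the glued map built from a generating arc `α`: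
`g(t) = α(t)` on `[0, ℓ/4)`, `g(t) = Rᵢ(α(ψᵢ^ℓ(t)))` on `[iℓ/4, (i+1)ℓ/4)` for `i = 1,2,3`,
extended `ℓ`-periodically. -/
def glue (ℓ : ℝ) (α : ℝ → E3) (t : ℝ) : E3 :=
  let s := t - ℓ * (⌊t / ℓ⌋ : ℝ)
  if s < ℓ / 4 then α s
  else if s < ℓ / 2 then Rot 0 (α (psi ℓ 0 s))
  else if s < 3 * ℓ / 4 then Rot 1 (α (psi ℓ 1 s))
  else Rot 2 (α (psi ℓ 2 s))

section UnionOfPieces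

lemma continuousOn_union_of_inter_closure_subset {X Y : Type*} [TopologicalSpace X]
    [TopologicalSpace Y] {g : X → Y} {s t : Set X} (hst : s ∩ closure t ⊆ t)
    (hts : t ∩ closure s ⊆ s) (hgs : ContinuousOn g s) (hgt : ContinuousOn g t) :
    ContinuousOn g (s ∪ t) := by
  rintro x (hxs | hxt)
  · refine (hgs x hxs).union ?_
    by_cases hxt : x ∈ closure t
    · exact hgt x (hst ⟨hxs, hxt⟩)
    · exact continuousWithinAt_of_notMem_closure hxt
  · refine ContinuousWithinAt.union ?_ (hgt x hxt)
    by_cases hxs : x ∈ closure s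
    · exact hgs x (hts ⟨hxt, hxs⟩)
    · exact continuousWithinAt_of_notMem_closure hxs

variable {𝕜 E : Type*} [NontriviallyNormedField 𝕜] [NormedAddCommGroup E] [NormedSpace 𝕜 E]
  {f : 𝕜 → E} {s t : Set 𝕜}

lemma hasDerivWithinAt_union_of_eqOn_derivWithin (hst : s ∩ closure t ⊆ t)
    (hfs : DifferentiableOn 𝕜 f s) (hft : DifferentiableOn 𝕜 f t)
    (hd : EqOn (derivWithin f s) (derivWithin f t) (s ∩ t)) {x : 𝕜} (hx : x ∈ s) :
    HasDerivWithinAt f (derivWithin f s x) (s ∪ t) x := by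
  refine (hfs x hx).hasDerivWithinAt.union ?_
  by_cases hxt : x ∈ closure t
  · have hxt : x ∈ t := hst ⟨hx, hxt⟩
    rw [hd ⟨hx, hxt⟩]
    exact (hft x hxt).hasDerivWithinAt
  · exact HasFDerivWithinAt.of_notMem_closure hxt

lemma contDiffOn_one_union_iff (hs : UniqueDiffOn 𝕜 s) (ht : UniqueDiffOn 𝕜 t)
    (hst : s ∩ closure t ⊆ t) (hts : t ∩ closure s ⊆ s) :
    ContDiffOn 𝕜 1 f (s ∪ t) ↔ ContDiffOn 𝕜 1 f s ∧ ContDiffOn 𝕜 1 f t ∧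
      EqOn (derivWithin f s) (derivWithin f t) (s ∩ t) := by
  constructor
  · intro hf
    refine ⟨hf.mono subset_union_left, hf.mono subset_union_right, fun x hx => ?_⟩
    have hfx := hf.differentiableOn one_ne_zero x (Or.inl hx.1)
    rw [derivWithin_subset subset_union_left (hs x hx.1) hfx,
      derivWithin_subset subset_union_right (ht x hx.2) hfx]
  · rintro ⟨hfs, hft, hd⟩
    rw [contDiffOn_one_iff_derivWithin hs] at hfs
    rw [contDiffOn_one_iff_derivWithin ht] at hft
    have hus : ∀ x ∈ s, HasDerivWithinAt f (derivWithin f s x) (s ∪ t) x := fun x hx =>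
      hasDerivWithinAt_union_of_eqOn_derivWithin hst hfs.1 hft.1 hd hx
    have hut : ∀ x ∈ t, HasDerivWithinAt f (derivWithin f t x) (s ∪ t) x := fun x hx =>
      union_comm t s ▸ hasDerivWithinAt_union_of_eqOn_derivWithin hts hft.1 hfs.1
        (inter_comm s t ▸ hd.symm) hx
    have hu : UniqueDiffOn 𝕜 (s ∪ t) := by
      rintro x (hx | hx)
      exacts [(hs x hx).mono subset_union_left, (ht x hx).mono subset_union_right]
    rw [contDiffOn_one_iff_derivWithin hu]
    constructor
    · rintro x (hx | hx)
      exacts [(hus x hx).differentiableWithinAt, (hut x hx).differentiableWithinAt]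
    · refine continuousOn_union_of_inter_closure_subset hst hts ?_ ?_
      · exact hfs.2.congr fun x hx => (hus x hx).derivWithin (hu x (Or.inl hx))
      · exact hft.2.congr fun x hx => (hut x hx).derivWithin (hu x (Or.inr hx))

end UnionOfPieces

section Reflection

variable {𝕜 E F : Type*} [NontriviallyNormedField 𝕜] [NormedAddCommGroup E] [NormedSpace 𝕜 E]
  [NormedAddCommGroup F] [NormedSpace 𝕜 F] {u : 𝕜 → E} {s : Set 𝕜}

lemma contDiffOn_clm_comp_const_sub {n : WithTop ℕ∞} (L : E →L[𝕜] F) (hu : ContDiffOn 𝕜 n u s)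
    (c : 𝕜) : ContDiffOn 𝕜 n (fun x => L (u (c - x))) ((fun x => c - x) ⁻¹' s) :=
  L.contDiff.comp_contDiffOn (hu.comp (contDiff_const.sub contDiff_id).contDiffOn fun _ => id)

lemma hasDerivWithinAt_clm_comp_const_sub (L : E →L[𝕜] F) {c x : 𝕜} {u' : E}
    (hu : HasDerivWithinAt u u' s (c - x)) :
    HasDerivWithinAt (fun x => L (u (c - x))) (-L u') ((fun x => c - x) ⁻¹' s) x := by
  have hrefl : HasDerivWithinAt (fun x => c - x) (-1) ((fun x => c - x) ⁻¹' s) x :=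
    (hasDerivWithinAt_id x _).const_sub c
  simpa [Function.comp_def] using
    L.hasFDerivAt.comp_hasDerivWithinAt x (hu.scomp x hrefl fun _ => id)

end Reflection

section Junction

variable {E : Type*} [NormedAddCommGroup E] [NormedSpace ℝ E] {f u v : ℝ → E} {a b c : ℝ}

lemma derivWithin_Ioc_eq_Icc (f : ℝ → E) (hab : a < b) :
    derivWithin f (Ioc a b) b = derivWithin f (Icc a b) b := by
  refine derivWithin_congr_set ?_
  filter_upwards [Ioi_mem_nhds hab] with t ht
  exact propext (and_congr_left fun _ => ⟨le_of_lt, fun _ => ht⟩)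

lemma derivWithin_Ico_eq_Icc (f : ℝ → E) (hab : a < b) :
    derivWithin f (Ico a b) a = derivWithin f (Icc a b) a := by
  refine derivWithin_congr_set ?_
  filter_upwards [Iio_mem_nhds hab] with t ht
  exact propext (and_congr_right fun _ => ⟨le_of_lt, fun _ => ht⟩)

lemma contDiffOn_one_Ioo_iff (hab : a < b) (hbc : b < c) :
    ContDiffOn ℝ 1 f (Ioo a c) ↔ ContDiffOn ℝ 1 f (Ioc a b) ∧ ContDiffOn ℝ 1 f (Ico b c) ∧
      derivWithin f (Icc a b) b = derivWithin f (Icc b c) b := by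
  have hinter : Ioc a b ∩ Ico b c = {b} := by
    ext t
    simp only [mem_inter_iff, mem_Ioc, mem_Ico, mem_singleton_iff]
    constructor
    · exact fun ht => ht.1.2.antisymm ht.2.1
    · rintro rfl
      exact ⟨⟨hab, le_rfl⟩, le_rfl, hbc⟩
  rw [← Ioc_union_Ico_eq_Ioo hab hbc, contDiffOn_one_union_iff (uniqueDiffOn_Ioc a b)
    (uniqueDiffOn_Ico b c), hinter, eqOn_singleton, derivWithin_Ioc_eq_Icc f hab,
    derivWithin_Ico_eq_Icc f hbc]
  · rw [closure_Ico hbc.ne]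
    exact fun t ht => ⟨ht.2.1, ht.1.2.trans_lt hbc⟩
  · rw [closure_Ioc hab.ne]
    exact fun t ht => ⟨hab.trans_le ht.1.1, ht.2.2⟩

lemma contDiffOn_one_Ioo_iff_of_eqOn (hab : a < b) (hbc : b < c)
    (hu : ContDiffOn ℝ 1 u (Icc a b)) (hv : ContDiffOn ℝ 1 v (Icc b c))
    (hfu : EqOn f u (Ioo a b)) (hfv : EqOn f v (Ico b c)) :
    ContDiffOn ℝ 1 f (Ioo a c) ↔
      u b = v b ∧ derivWithin u (Icc a b) b = derivWithin v (Icc b c) b := by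
  have hfb : f b = v b := hfv ⟨le_rfl, hbc⟩
  have hu' : ContDiffOn ℝ 1 u (Ioc a b) := hu.mono Ioc_subset_Icc_self
  have hv' : ContDiffOn ℝ 1 v (Ico b c) := hv.mono Ico_subset_Icc_self
  have hmatch : ContDiffOn ℝ 1 f (Ioo a c) → u b = v b := fun hf => by
    have hfu' : EqOn f u (Ioc a b) := by
      refine hfu.of_subset_closure (hf.continuousOn.mono (Ioc_subset_Ioo_right hbc))
        hu'.continuousOn Ioo_subset_Ioc_self ?_
      rw [closure_Ioo hab.ne]
      exact Ioc_subset_Icc_self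
    rw [← hfb, hfu' ⟨hab, le_rfl⟩]
  have hderiv : u b = v b → (ContDiffOn ℝ 1 f (Ioo a c) ↔
      derivWithin u (Icc a b) b = derivWithin v (Icc b c) b) := fun huv => by
    have hfu' : EqOn f u (Ioc a b) := by
      rw [← Ioo_insert_right hab, insert_eq, eqOn_union, eqOn_singleton]
      exact ⟨hfb.trans huv.symm, hfu⟩
    rw [contDiffOn_one_Ioo_iff hab hbc, contDiffOn_congr hfu', contDiffOn_congr hfv,
      ← derivWithin_Ioc_eq_Icc f hab, ← derivWithin_Ico_eq_Icc f hbc,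
      derivWithin_congr hfu' (hfb.trans huv.symm), derivWithin_congr hfv hfb,
      derivWithin_Ioc_eq_Icc u hab, derivWithin_Ico_eq_Icc v hbc]
    exact ⟨fun h => h.2.2, fun h => ⟨hu', hv', h⟩⟩
  exact ⟨fun hf => ⟨hmatch hf, (hderiv (hmatch hf)).1 hf⟩, fun h => (hderiv h.1).2 h.2⟩

lemma contDiffOn_one_iff_of_reflect_right (L : E →L[ℝ] E) (hab : a < b)
    (hu : ContDiffOn ℝ 1 u (Icc a b)) (hfu : EqOn f u (Ioo a b))
    (hfL : EqOn f (fun t => L (u (2 * b - t))) (Ico b (2 * b - a))) :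
    ContDiffOn ℝ 1 f (Ioo a (2 * b - a)) ↔
      L (u b) = u b ∧ L (derivWithin u (Icc a b) b) = -derivWithin u (Icc a b) b := by
  have hb : 2 * b - b = b := by ring
  have hpre : (fun t => 2 * b - t) ⁻¹' Icc a b = Icc b (2 * b - a) := by
    rw [preimage_const_sub_Icc, hb]
  have hv := contDiffOn_clm_comp_const_sub L hu (2 * b)
  have hu' : HasDerivWithinAt u (derivWithin u (Icc a b) b) (Icc a b) (2 * b - b) := by
    rw [hb]
    exact (hu.differentiableOn one_ne_zero b (right_mem_Icc.2 hab.le)).hasDerivWithinAt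
  have hv' := hasDerivWithinAt_clm_comp_const_sub L hu'
  rw [hpre] at hv hv'
  have hdv := hv'.derivWithin (uniqueDiffOn_Icc (by linarith) b (left_mem_Icc.2 (by linarith)))
  rw [contDiffOn_one_Ioo_iff_of_eqOn hab (by linarith) hu hv hfu hfL, hdv, hb, eq_comm,
    eq_neg_iff_add_eq_zero, eq_neg_iff_add_eq_zero, add_comm]

lemma contDiffOn_one_iff_of_reflect_left (L : E →L[ℝ] E) (hab : a < b)
    (hu : ContDiffOn ℝ 1 u (Icc a b))
    (hfL : EqOn f (fun t => L (u (2 * a - t))) (Ioo (2 * a - b) a)) (hfu : EqOn f u (Ico a b)) :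
    ContDiffOn ℝ 1 f (Ioo (2 * a - b) b) ↔
      L (u a) = u a ∧ L (derivWithin u (Icc a b) a) = -derivWithin u (Icc a b) a := by
  have ha : 2 * a - a = a := by ring
  have hpre : (fun t => 2 * a - t) ⁻¹' Icc a b = Icc (2 * a - b) a := by
    rw [preimage_const_sub_Icc, ha]
  have hv := contDiffOn_clm_comp_const_sub L hu (2 * a)
  have hu' : HasDerivWithinAt u (derivWithin u (Icc a b) a) (Icc a b) (2 * a - a) := by
    rw [ha]
    exact (hu.differentiableOn one_ne_zero a (left_mem_Icc.2 hab.le)).hasDerivWithinAt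
  have hv' := hasDerivWithinAt_clm_comp_const_sub L hu'
  rw [hpre] at hv hv'
  have hdv := hv'.derivWithin (uniqueDiffOn_Icc (by linarith) a (right_mem_Icc.2 (by linarith)))
  rw [contDiffOn_one_Ioo_iff_of_eqOn (by linarith) hab hv hu hfL hfu, hdv, ha, neg_eq_iff_eq_neg]

end Junction

lemma periodic_contDiffAt_of_add_eq {𝕜 E : Type*} [NontriviallyNormedField 𝕜]
    [NormedAddCommGroup E] [NormedSpace 𝕜 E] {f : 𝕜 → E} {p : 𝕜} (L : E ≃L[𝕜] E)
    (hf : ∀ t, f (t + p) = L (f t)) (n : WithTop ℕ∞) :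
    Function.Periodic (fun t => ContDiffAt 𝕜 n f t) p := by
  intro t
  suffices ContDiffAt 𝕜 n f (t + p) ↔ ContDiffAt 𝕜 n f t from propext this
  have hshift : (fun x => f (x + p)) = L ∘ f := funext hf
  refine ⟨fun h => ?_, fun h => ?_⟩
  · rw [← L.comp_contDiffAt_iff, ← hshift]
    exact h.comp t (contDiffAt_id.add contDiffAt_const)
  · have hunshift : f = fun x => L (f (x - p)) := by
      ext x
      rw [← hf, sub_add_cancel]
    rw [hunshift]
    refine L.contDiff.contDiffAt.comp (t + p) (ContDiffAt.comp (t + p) ?_ ?_)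
    · rwa [add_sub_cancel_right]
    · exact contDiffAt_id.sub contDiffAt_const

section Rotations

@[simp] lemma vec3_apply_zero (a b c : ℝ) : vec3 a b c 0 = a := rfl
@[simp] lemma vec3_apply_one (a b c : ℝ) : vec3 a b c 1 = b := rfl
@[simp] lemma vec3_apply_two (a b c : ℝ) : vec3 a b c 2 = c := rfl

lemma E3.ext_iff_coords {x y : E3} : x = y ↔ x 0 = y 0 ∧ x 1 = y 1 ∧ x 2 = y 2 := by
  rw [PiLp.ext_iff]
  simp [Fin.forall_fin_succ]

lemma rot_one_rot_zero (x : E3) : Rot 1 (Rot 0 x) = Rot 2 x := by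
  simp [Rot]

lemma involutive_rot (i : Fin 3) : Function.Involutive (Rot i) := by
  intro x
  fin_cases i <;> simp [Rot, E3.ext_iff_coords]

lemma isLinearMap_rot (i : Fin 3) : IsLinearMap ℝ (Rot i) where
  map_add x y := by fin_cases i <;> simp [Rot, E3.ext_iff_coords, add_comm]
  map_smul c x := by fin_cases i <;> simp [Rot, E3.ext_iff_coords]

/-- The rotation `Rot i` as a continuous linear automorphism of `ℝ³`. -/
def rotCLE (i : Fin 3) : E3 ≃L[ℝ] E3 :=
  (LinearEquiv.ofInvolutive ((isLinearMap_rot i).mk' (Rot i))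
    (involutive_rot i)).toContinuousLinearEquiv

lemma coe_rotCLE (i : Fin 3) : ⇑(rotCLE i) = Rot i := rfl

lemma rot_zero_eq_self_iff {x : E3} : Rot 0 x = x ↔ ∃ c : ℝ, x = c • e1 := by
  simp [Rot, e1, E3.ext_iff_coords, neg_eq_self]

lemma rot_two_eq_self_iff {x : E3} : Rot 2 x = x ↔ ∃ c : ℝ, x = c • e3 := by
  simp [Rot, e3, E3.ext_iff_coords, neg_eq_self]

lemma rot_zero_eq_neg_iff {x : E3} :
    Rot 0 x = -x ↔ x ∈ Submodule.span ℝ ({e2, e3} : Set E3) := by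
  simp [Rot, e2, e3, Submodule.mem_span_pair, E3.ext_iff_coords, self_eq_neg, eq_comm]

lemma rot_two_eq_neg_iff {x : E3} :
    Rot 2 x = -x ↔ x ∈ Submodule.span ℝ ({e1, e2} : Set E3) := by
  simp [Rot, e1, e2, Submodule.mem_span_pair, E3.ext_iff_coords, self_eq_neg, eq_comm]

end Rotations

section Glue

variable {ℓ : ℝ} {α : ℝ → E3}

lemma glue_periodic (hℓ : ℓ ≠ 0) (α : ℝ → E3) : Function.Periodic (glue ℓ α) ℓ := by
  intro t
  have hs : t + ℓ - ℓ * (⌊(t + ℓ) / ℓ⌋ : ℝ) = t - ℓ * (⌊t / ℓ⌋ : ℝ) := by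
    rw [add_div, div_self hℓ, Int.floor_add_one]
    push_cast
    ring
  simp only [glue, hs]

lemma glue_of_mem_Ico (α : ℝ → E3) {t : ℝ} (ht : t ∈ Ico 0 ℓ) :
    glue ℓ α t = if t < ℓ / 4 then α t
      else if t < ℓ / 2 then Rot 0 (α (ℓ / 2 - t))
      else if t < 3 * ℓ / 4 then Rot 1 (α (t - ℓ / 2))
      else Rot 2 (α (ℓ - t)) := by
  have hℓ : 0 < ℓ := ht.1.trans_lt ht.2
  have hfloor : ⌊t / ℓ⌋ = 0 :=
    Int.floor_eq_zero_iff.2 ⟨div_nonneg ht.1 hℓ.le, (div_lt_one hℓ).2 ht.2⟩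
  simp [glue, hfloor, psi]

lemma eqOn_glue_quarter_one (ℓ : ℝ) (α : ℝ → E3) : EqOn (glue ℓ α) α (Ico 0 (ℓ / 4)) := by
  rintro t ⟨h0, h1⟩
  rw [glue_of_mem_Ico α ⟨h0, by linarith⟩, if_pos h1]

lemma eqOn_glue_quarter_two (ℓ : ℝ) (α : ℝ → E3) :
    EqOn (glue ℓ α) (fun t => Rot 0 (α (ℓ / 2 - t))) (Ico (ℓ / 4) (ℓ / 2)) := by
  rintro t ⟨h1, h2⟩
  rw [glue_of_mem_Ico α ⟨by linarith, by linarith⟩, if_neg h1.not_gt, if_pos h2]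

lemma eqOn_glue_quarter_three (ℓ : ℝ) (α : ℝ → E3) :
    EqOn (glue ℓ α) (fun t => Rot 1 (α (t - ℓ / 2))) (Ico (ℓ / 2) (3 * ℓ / 4)) := by
  rintro t ⟨h2, h3⟩
  rw [glue_of_mem_Ico α ⟨by linarith, by linarith⟩, if_neg (by linarith), if_neg h2.not_gt,
    if_pos h3]

lemma eqOn_glue_quarter_four (ℓ : ℝ) (α : ℝ → E3) :
    EqOn (glue ℓ α) (fun t => Rot 2 (α (ℓ - t))) (Ico (3 * ℓ / 4) ℓ) := by
  rintro t ⟨h3, h4⟩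
  rw [glue_of_mem_Ico α ⟨by linarith, h4⟩, if_neg (by linarith), if_neg (by linarith),
    if_neg h3.not_gt]

lemma eqOn_glue_quarter_zero (ℓ : ℝ) (α : ℝ → E3) :
    EqOn (glue ℓ α) (fun t => Rot 2 (α (-t))) (Ico (-(ℓ / 4)) 0) := by
  rintro t ⟨hl, h0⟩
  rw [← glue_periodic (by linarith) α t,
    eqOn_glue_quarter_four ℓ α ⟨by linarith, by linarith⟩]
  simp

lemma glue_add_half_of_mem_Ico (α : ℝ → E3) {t : ℝ} (ht : t ∈ Ico 0 (ℓ / 2)) :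
    glue ℓ α (t + ℓ / 2) = Rot 1 (glue ℓ α t) := by
  obtain ⟨h0, h2⟩ := ht
  rcases lt_or_ge t (ℓ / 4) with h1 | h1
  · rw [eqOn_glue_quarter_one ℓ α ⟨h0, h1⟩,
      eqOn_glue_quarter_three ℓ α ⟨by linarith, by linarith⟩]
    simp
  · rw [eqOn_glue_quarter_two ℓ α ⟨h1, h2⟩,
      eqOn_glue_quarter_four ℓ α ⟨by linarith, by linarith⟩]
    simp only [rot_one_rot_zero]
    congr 2
    ring

lemma glue_add_half (hℓ : 0 < ℓ) (α : ℝ → E3) (t : ℝ) :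
    glue ℓ α (t + ℓ / 2) = Rot 1 (glue ℓ α t) := by
  have hper := glue_periodic hℓ.ne' α
  have hper_eq : Function.Periodic (fun t => glue ℓ α (t + ℓ / 2) = Rot 1 (glue ℓ α t)) ℓ := by
    intro t
    simp only [add_right_comm t ℓ, hper _]
  obtain ⟨s, ⟨h0, hl⟩, hs⟩ := hper_eq.exists_mem_Ico₀ hℓ t
  rw [hs]
  rcases lt_or_ge s (ℓ / 2) with h2 | h2
  · exact glue_add_half_of_mem_Ico α ⟨h0, h2⟩
  · have hs' : s - ℓ / 2 ∈ Ico 0 (ℓ / 2) := ⟨by linarith, by linarith⟩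
    have hhalf := glue_add_half_of_mem_Ico α hs'
    rw [sub_add_cancel] at hhalf
    rw [hhalf, involutive_rot 1, ← hper (s - ℓ / 2)]
    congr 1
    ring

lemma contDiff_glue_iff_contDiffOn (hℓ : 0 < ℓ) (α : ℝ → E3) (n : WithTop ℕ∞) :
    ContDiff ℝ n (glue ℓ α) ↔ ContDiffOn ℝ n (glue ℓ α) (Ioo (-(ℓ / 4)) (ℓ / 4)) ∧
      ContDiffOn ℝ n (glue ℓ α) (Ioo 0 (ℓ / 2)) := by
  refine ⟨fun h => ⟨h.contDiffOn, h.contDiffOn⟩, fun ⟨hzero, hquarter⟩ => ?_⟩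
  rw [contDiff_iff_contDiffAt]
  intro t
  obtain ⟨s, ⟨hs, hs'⟩, hts⟩ :=
    (periodic_contDiffAt_of_add_eq (rotCLE 1) (glue_add_half hℓ α) n).exists_mem_Ioc
      (half_pos hℓ) t (-(ℓ / 4))
  rw [hts]
  rcases lt_or_ge s (ℓ / 4) with h | h
  · exact hzero.contDiffAt (Ioo_mem_nhds hs h)
  · exact hquarter.contDiffAt (Ioo_mem_nhds (by linarith) (by linarith))

lemma contDiffOn_glue_Ioo_neg_quarter_quarter_iff (hℓ : 0 < ℓ)
    (hα : ContDiffOn ℝ 1 α (Icc 0 (ℓ / 4))) :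
    ContDiffOn ℝ 1 (glue ℓ α) (Ioo (-(ℓ / 4)) (ℓ / 4)) ↔ Rot 2 (α 0) = α 0 ∧
      Rot 2 (derivWithin α (Icc 0 (ℓ / 4)) 0) = -derivWithin α (Icc 0 (ℓ / 4)) 0 := by
  have hleft := (eqOn_glue_quarter_zero ℓ α).mono Ioo_subset_Ico_self
  simpa [coe_rotCLE] using contDiffOn_one_iff_of_reflect_left (f := glue ℓ α)
    (rotCLE 2 : E3 →L[ℝ] E3) (by linarith) hα (by simpa [coe_rotCLE] using hleft)
    (eqOn_glue_quarter_one ℓ α)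

lemma contDiffOn_glue_Ioo_zero_half_iff (hℓ : 0 < ℓ)
    (hα : ContDiffOn ℝ 1 α (Icc 0 (ℓ / 4))) :
    ContDiffOn ℝ 1 (glue ℓ α) (Ioo 0 (ℓ / 2)) ↔ Rot 0 (α (ℓ / 4)) = α (ℓ / 4) ∧
      Rot 0 (derivWithin α (Icc 0 (ℓ / 4)) (ℓ / 4)) =
        -derivWithin α (Icc 0 (ℓ / 4)) (ℓ / 4) := by
  have hcenter : 2 * (ℓ / 4) = ℓ / 2 := by ring
  have hleft := (eqOn_glue_quarter_one ℓ α).mono Ioo_subset_Ico_self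
  simpa [coe_rotCLE, hcenter] using contDiffOn_one_iff_of_reflect_right (rotCLE 0 : E3 →L[ℝ] E3)
    (by linarith) hα hleft (by simpa [coe_rotCLE, hcenter] using eqOn_glue_quarter_two ℓ α)

end Glue

/-- For continuously differentiable `α : [0, ℓ/4] → ℝ³`, the `ℓ`-periodic
extension `g` of the glued map is continuously differentiable on all of `ℝ` if and only if
`α(0) ∈ ℝe₃`, `α(ℓ/4) ∈ ℝe₁`, `α'(0) ∈ span{e₁, e₂}` and `α'(ℓ/4) ∈ span{e₂, e₃}`
(with one-sided derivatives at the endpoints). -/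
theorem glued_curve_contDiff_iff (ℓ : ℝ) (hℓ : 0 < ℓ) (α : ℝ → E3)
    (hα : ContDiffOn ℝ 1 α (Icc 0 (ℓ / 4))) :
    ContDiff ℝ 1 (glue ℓ α) ↔
      ((∃ c : ℝ, α 0 = c • e3) ∧ (∃ c : ℝ, α (ℓ / 4) = c • e1) ∧
        derivWithin α (Icc 0 (ℓ / 4)) 0 ∈ Submodule.span ℝ ({e1, e2} : Set E3) ∧
        derivWithin α (Icc 0 (ℓ / 4)) (ℓ / 4) ∈ Submodule.span ℝ ({e2, e3} : Set E3)) := by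
  rw [contDiff_glue_iff_contDiffOn hℓ, contDiffOn_glue_Ioo_neg_quarter_quarter_iff hℓ hα,
    contDiffOn_glue_Ioo_zero_half_iff hℓ hα, rot_two_eq_self_iff, rot_two_eq_neg_iff,
    rot_zero_eq_self_iff, rot_zero_eq_neg_iff]
  tauto
end
end

section
/- Bending energy of the helical part of the symmetric torus-knot family: let b ≥ 3 be an odd integer and ε > 0. Define φ : [0,∞) → ℝ by φ(t) = t for t ∈ [0, (b−1)/2], φ(t) = b/2 − (1/2)(t − (b+1)/2)² for t ∈ [(b−1)/2, (b+1)/2], and φ(t) = b/2 for t ≥ (b+1)/2, and define h^ε : [0,∞) → ℝ³ by h^ε(t) = (ε²·(−1)^{(b−1)/2}·sin(π·φ(t/ε)), t, ε²·cos(π·φ(t/ε))). Then h^ε is continuously differentiable, twice differentiable outside the finite set {(b−1)ε/2, (b+1)ε/2}, its second derivative there satisfies ‖(h^ε)''(t)‖² = π⁴·φ'(t/ε)⁴ + π²·φ''(t/ε)², and ∫₀^{(b+1)ε/2} ‖(h^ε)''(t)‖² dt ≤ ε·π²·(π²·((b−1)/2 + 1/5) + (b+1)/2) < ε·π⁴·(b+1).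 -/
noncomputable section

open Real Set

/-- The parameter transformation `φ` (for an odd integer `b ≥ 3`). -/
def phi (b : ℕ) (t : ℝ) : ℝ :=
  if t ≤ ((b : ℝ) - 1) / 2 then t
  else if t ≤ ((b : ℝ) + 1) / 2 then (b : ℝ) / 2 - (1 / 2) * (t - ((b : ℝ) + 1) / 2) ^ 2
  else (b : ℝ) / 2

/-- The helical part `h^ε` of the generating arc of the D₂-symmetric `(2,b)`-torus knots
(with `ρ = ε²`). -/
def hel (b : ℕ) (ε : ℝ) (t : ℝ) : E3 :=
  vec3 (ε ^ 2 * (-1 : ℝ) ^ ((b - 1) / 2) * Real.sin (π * phi b (t / ε)))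
    t
    (ε ^ 2 * Real.cos (π * phi b (t / ε)))

/-!
Write `h^ε` as the curve `t ↦ (rσ sin θ(t), t, r cos θ(t))` with `r = ε²`, `σ = ±1` and angle
`θ(t) = π φ(t / ε)`. In `h''` the terms carrying `θ'²` and `θ''` point along the radial and the
tangential direction of the circle, so `‖h''‖² = r² (θ'⁴ + θ''²)`. The factors `1 / ε` produced by
the inner derivative cancel `r²` exactly, whence `‖h''‖² = π⁴ φ'⁴ + π² φ''²` at `t / ε`.

With `p = (b - 1) / 2` the slope `φ'` is `1` on `[0, p]` and decreases linearly to `0` on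
`[p, p + 1]`, so `∫ φ'⁴ = p + 1 / 5`. Since `|φ''| ≤ 1`, the other term contributes at most
`π² (p + 1)`; the substitution `x = t / ε` multiplies both by `ε`. The strict inequality comes from
`1 < π²`.
-/

/-- The parameter transformation `φ` of the torus knots with an arbitrary real end `p ≥ 0` of its
linear part in place of `(b - 1) / 2`. The three branches are encoded at once by positive parts. -/
def softRamp (p t : ℝ) : ℝ :=
  t - max 0 (t - p) ^ 2 / 2 + max 0 (t - (p + 1)) ^ 2 / 2

/-- The curve over the second coordinate axis with radius `r`, orientation `σ = ±1` and angle
function `θ`. -/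
def helix (r σ : ℝ) (θ : ℝ → ℝ) (t : ℝ) : E3 :=
  vec3 (r * σ * sin (θ t)) t (r * cos (θ t))

lemma phi_eq_softRamp (b : ℕ) : phi b = softRamp (((b : ℝ) - 1) / 2) := by
  funext t
  unfold phi softRamp
  split_ifs with hp hq
  · rw [max_eq_left (by linarith), max_eq_left (by linarith)]; ring
  · rw [max_eq_right (by linarith), max_eq_left (by linarith)]; ring
  · rw [max_eq_right (by linarith), max_eq_right (by linarith)]; ring

lemma hel_eq_helix (b : ℕ) (ε : ℝ) :
    hel b ε = helix (ε ^ 2) ((-1) ^ ((b - 1) / 2)) fun t => π * phi b (t / ε) :=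
  rfl

section SoftRamp

lemma hasDerivAt_max_zero {x : ℝ} (hx : x ≠ 0) :
    HasDerivAt (fun y : ℝ => max 0 y) (if 0 < x then 1 else 0) x := by
  rcases hx.lt_or_gt with h | h
  · rw [if_neg h.not_gt]
    refine (hasDerivAt_const x (0 : ℝ)).congr_of_eventuallyEq ?_
    filter_upwards [Iio_mem_nhds h] with y hy using max_eq_left (le_of_lt hy)
  · rw [if_pos h]
    refine (hasDerivAt_id x).congr_of_eventuallyEq ?_
    filter_upwards [Ioi_mem_nhds h] with y hy using max_eq_right (le_of_lt hy)

lemma hasDerivAt_max_zero_sq_div_two (x : ℝ) :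
    HasDerivAt (fun y : ℝ => max 0 y ^ 2 / 2) (max 0 x) x := by
  -- Continuity of the function and of its claimed derivative removes the exceptional point `0`.
  refine hasDerivAt_of_hasDerivAt_of_ne' (x := 0) (g := max 0) (fun y hy => ?_)
    (by fun_prop) (by fun_prop) x
  refine (((hasDerivAt_max_zero hy).pow 2).div_const 2).congr_deriv ?_
  split_ifs with h
  · simp
  · simp [max_eq_left (not_lt.mp h)]

lemma hasDerivAt_softRamp (p t : ℝ) :
    HasDerivAt (softRamp p) (1 - max 0 (t - p) + max 0 (t - (p + 1))) t :=
  ((hasDerivAt_id t).sub ((hasDerivAt_max_zero_sq_div_two (t - p)).comp_sub_const t p)).add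
    ((hasDerivAt_max_zero_sq_div_two (t - (p + 1))).comp_sub_const t (p + 1))

lemma deriv_softRamp (p : ℝ) :
    deriv (softRamp p) = fun t => 1 - max 0 (t - p) + max 0 (t - (p + 1)) :=
  funext fun t => (hasDerivAt_softRamp p t).deriv

lemma contDiff_softRamp (p : ℝ) : ContDiff ℝ 1 (softRamp p) := by
  refine contDiff_one_iff_deriv.mpr ⟨fun t => (hasDerivAt_softRamp p t).differentiableAt, ?_⟩
  rw [deriv_softRamp]
  fun_prop

lemma deriv_softRamp_of_le {p t : ℝ} (ht : t ≤ p) : deriv (softRamp p) t = 1 := by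
  simp only [deriv_softRamp]
  rw [max_eq_left (by linarith), max_eq_left (by linarith)]
  ring

lemma deriv_softRamp_of_mem_Icc {p t : ℝ} (ht : t ∈ Icc p (p + 1)) :
    deriv (softRamp p) t = p + 1 - t := by
  simp only [deriv_softRamp]
  rw [max_eq_right (by linarith [ht.1]), max_eq_left (by linarith [ht.2])]
  ring

lemma hasDerivAt_deriv_softRamp {p t : ℝ} (hp : t ≠ p) (hq : t ≠ p + 1) :
    HasDerivAt (deriv (softRamp p)) (if t ∈ Ioo p (p + 1) then -1 else 0) t := by
  rw [deriv_softRamp]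
  refine (((hasDerivAt_const t (1 : ℝ)).sub
    ((hasDerivAt_max_zero (sub_ne_zero.mpr hp)).comp_sub_const t p)).add
    ((hasDerivAt_max_zero (sub_ne_zero.mpr hq)).comp_sub_const t (p + 1))).congr_deriv ?_
  simp only [sub_pos, mem_Ioo]
  grind

lemma sq_deriv_deriv_softRamp_le_one {p t : ℝ} (hp : t ≠ p) (hq : t ≠ p + 1) :
    deriv (deriv (softRamp p)) t ^ 2 ≤ 1 := by
  rw [(hasDerivAt_deriv_softRamp hp hq).deriv]
  split_ifs <;> norm_num

lemma integral_deriv_softRamp_pow {p : ℝ} (hp : 0 ≤ p) (n : ℕ) :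
    ∫ t in (0 : ℝ)..(p + 1), deriv (softRamp p) t ^ n = p + 1 / (n + 1) := by
  have hcont : Continuous fun t => deriv (softRamp p) t ^ n :=
    ((contDiff_softRamp p).continuous_deriv_one).pow n
  have hlinear : ∫ t in (0 : ℝ)..p, deriv (softRamp p) t ^ n = p := by
    rw [intervalIntegral.integral_congr (g := fun _ => (1 : ℝ)) fun t ht => ?_]
    · simp
    · rw [uIcc_of_le hp] at ht
      simp only [deriv_softRamp_of_le ht.2, one_pow]
  have hbend : ∫ t in p..(p + 1), deriv (softRamp p) t ^ n = 1 / (n + 1) := by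
    rw [intervalIntegral.integral_congr (g := fun t => (p + 1 - t) ^ n) fun t ht => ?_]
    · rw [intervalIntegral.integral_comp_sub_left (fun x : ℝ => x ^ n), integral_pow]
      simp
    · rw [uIcc_of_le (by linarith)] at ht
      simp only [deriv_softRamp_of_mem_Icc ht]
  rw [← intervalIntegral.integral_add_adjacent_intervals
    (hcont.intervalIntegrable 0 p) (hcont.intervalIntegrable p (p + 1)), hlinear, hbend]

end SoftRamp

section Helix

lemma hasDerivAt_vec3 {f g k : ℝ → ℝ} {f' g' k' t : ℝ} (hf : HasDerivAt f f' t)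
    (hg : HasDerivAt g g' t) (hk : HasDerivAt k k' t) :
    HasDerivAt (fun s => vec3 (f s) (g s) (k s)) (vec3 f' g' k') t := by
  have hcoord : HasDerivAt (fun s => ![f s, g s, k s]) ![f', g', k'] t := by
    simp [hasDerivAt_pi, Fin.forall_fin_succ, hf, hg, hk]
  exact (PiLp.hasFDerivAt_toLp (𝕜 := ℝ) 2 ![f t, g t, k t]).comp_hasDerivAt t hcoord

lemma norm_vec3_sq (x y z : ℝ) : ‖vec3 x y z‖ ^ 2 = x ^ 2 + y ^ 2 + z ^ 2 := by
  simp [vec3, EuclideanSpace.norm_sq_eq, Fin.sum_univ_three]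

variable {r σ : ℝ} {θ : ℝ → ℝ} {t : ℝ}

lemma contDiff_helix {n : WithTop ℕ∞} (hθ : ContDiff ℝ n θ) : ContDiff ℝ n (helix r σ θ) := by
  refine contDiff_euclidean.mpr fun i => ?_
  fin_cases i
  · exact contDiff_const.mul hθ.sin
  · exact contDiff_id
  · exact contDiff_const.mul hθ.cos

lemma deriv_helix (hθ : Differentiable ℝ θ) :
    deriv (helix r σ θ) = fun t =>
      vec3 (r * σ * (cos (θ t) * deriv θ t)) 1 (r * (-sin (θ t) * deriv θ t)) :=
  funext fun t => (hasDerivAt_vec3 ((hθ t).hasDerivAt.sin.const_mul (r * σ)) (hasDerivAt_id t)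
    ((hθ t).hasDerivAt.cos.const_mul r)).deriv

lemma hasDerivAt_deriv_helix (hθ : Differentiable ℝ θ) (hθ' : DifferentiableAt ℝ (deriv θ) t) :
    HasDerivAt (deriv (helix r σ θ))
      (vec3 (r * σ * (-sin (θ t) * deriv θ t * deriv θ t + cos (θ t) * deriv (deriv θ) t)) 0
        (r * (-(cos (θ t) * deriv θ t) * deriv θ t + -sin (θ t) * deriv (deriv θ) t))) t := by
  have hθt := (hθ t).hasDerivAt
  rw [deriv_helix hθ]
  exact hasDerivAt_vec3 ((hθt.cos.mul hθ'.hasDerivAt).const_mul (r * σ)) (hasDerivAt_const t 1)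
    ((hθt.sin.neg.mul hθ'.hasDerivAt).const_mul r)

lemma norm_sq_deriv_deriv_helix (hσ : σ ^ 2 = 1) (hθ : Differentiable ℝ θ)
    (hθ' : DifferentiableAt ℝ (deriv θ) t) :
    ‖deriv (deriv (helix r σ θ)) t‖ ^ 2 =
      r ^ 2 * (deriv θ t ^ 4 + deriv (deriv θ) t ^ 2) := by
  rw [(hasDerivAt_deriv_helix hθ hθ').deriv, norm_vec3_sq]
  linear_combination
    r ^ 2 * (-sin (θ t) * deriv θ t ^ 2 + cos (θ t) * deriv (deriv θ) t) ^ 2 * hσ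
      + r ^ 2 * (deriv θ t ^ 4 + deriv (deriv θ) t ^ 2) * sin_sq_add_cos_sq (θ t)

end Helix

section RescaledHelix

lemma deriv_const_mul_comp_div (c ε : ℝ) (φ : ℝ → ℝ) :
    deriv (fun t => c * φ (t / ε)) = fun t => c / ε * deriv φ (t / ε) := by
  funext t
  simp only [deriv_const_mul_field', div_eq_inv_mul _ ε, deriv_comp_mul_left, smul_eq_mul]
  ring

variable {σ ε : ℝ} {φ : ℝ → ℝ} {t : ℝ}

lemma differentiableAt_deriv_const_mul_comp_div (c : ℝ)
    (hφ : DifferentiableAt ℝ (deriv φ) (t / ε)) :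
    DifferentiableAt ℝ (deriv fun t => c * φ (t / ε)) t := by
  rw [deriv_const_mul_comp_div]
  exact (hφ.comp t (differentiableAt_id.div_const ε)).const_mul (c / ε)

lemma norm_sq_deriv_deriv_helix_rescaled (hσ : σ ^ 2 = 1) (hε : ε ≠ 0) (hφ : Differentiable ℝ φ)
    (hφ' : DifferentiableAt ℝ (deriv φ) (t / ε)) :
    ‖deriv (deriv (helix (ε ^ 2) σ fun t => π * φ (t / ε))) t‖ ^ 2 =
      π ^ 4 * deriv φ (t / ε) ^ 4 + π ^ 2 * deriv (deriv φ) (t / ε) ^ 2 := by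
  rw [norm_sq_deriv_deriv_helix hσ (by fun_prop)
    (differentiableAt_deriv_const_mul_comp_div π hφ')]
  simp only [deriv_const_mul_comp_div]
  field_simp

lemma integral_norm_sq_deriv_deriv_helix_le {s : Set ℝ} {L M : ℝ} (hσ : σ ^ 2 = 1) (hε : 0 < ε)
    (hφ : ContDiff ℝ 1 φ) (hs : s.Countable)
    (hφ' : ∀ x ∉ s, DifferentiableAt ℝ (deriv φ) x ∧ deriv (deriv φ) x ^ 2 ≤ M) (hL : 0 ≤ L) :
    ∫ t in (0 : ℝ)..(L * ε), ‖deriv (deriv (helix (ε ^ 2) σ fun t => π * φ (t / ε))) t‖ ^ 2 ≤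
      ε * (π ^ 4 * (∫ x in (0 : ℝ)..L, deriv φ x ^ 4) + π ^ 2 * M * L) := by
  have hquartic : Continuous fun x => π ^ 4 * deriv φ x ^ 4 :=
    (hφ.continuous_deriv_one.pow 4).const_mul (π ^ 4)
  have hae : ∀ᵐ t : ℝ, t / ε ∉ s :=
    (hs.preimage fun _ _ h => (div_left_inj' hε.ne').mp h).ae_notMem MeasureTheory.volume
  calc ∫ t in (0 : ℝ)..(L * ε), ‖deriv (deriv (helix (ε ^ 2) σ fun t => π * φ (t / ε))) t‖ ^ 2
      ≤ ∫ t in (0 : ℝ)..(L * ε), (π ^ 4 * deriv φ (t / ε) ^ 4 + π ^ 2 * M) := by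
        simp only [intervalIntegral.integral_of_le (mul_nonneg hL hε.le)]
        -- This form of monotonicity asks for integrability of the continuous majorant only.
        refine MeasureTheory.integral_mono_of_nonneg (.of_forall fun t => by positivity)
          ((hquartic.comp (continuous_id.div_const ε)).add continuous_const).integrableOn_Ioc
          (MeasureTheory.ae_restrict_of_ae ?_)
        filter_upwards [hae] with t ht
        rw [norm_sq_deriv_deriv_helix_rescaled hσ hε.ne' (hφ.differentiable one_ne_zero)
          (hφ' _ ht).1]
        gcongr
        exact (hφ' _ ht).2
    _ = ε * ∫ x in (0 : ℝ)..L, (π ^ 4 * deriv φ x ^ 4 + π ^ 2 * M) := by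
        rw [intervalIntegral.integral_comp_div (fun x => π ^ 4 * deriv φ x ^ 4 + π ^ 2 * M) hε.ne',
          zero_div, mul_div_cancel_right₀ L hε.ne', smul_eq_mul]
    _ = ε * (π ^ 4 * (∫ x in (0 : ℝ)..L, deriv φ x ^ 4) + π ^ 2 * M * L) := by
        rw [intervalIntegral.integral_add (hquartic.intervalIntegrable _ _)
          intervalIntegrable_const, intervalIntegral.integral_const_mul,
          intervalIntegral.integral_const]
        simp only [sub_zero, smul_eq_mul]
        ring

end RescaledHelix

lemma helical_energy_bound_lt {p ε : ℝ} (hp : 0 ≤ p) (hε : 0 < ε) :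
    ε * π ^ 2 * (π ^ 2 * (p + 1 / 5) + (p + 1)) < ε * π ^ 4 * (2 * p + 2) := by
  have hpi : 1 < π ^ 2 := one_lt_pow₀ (by linarith [pi_gt_three]) two_ne_zero
  calc ε * π ^ 2 * (π ^ 2 * (p + 1 / 5) + (p + 1))
      < ε * π ^ 2 * (π ^ 2 * (p + 1) + π ^ 2 * (p + 1)) := by
        gcongr
        · norm_num
        · exact lt_mul_left (by linarith) hpi
    _ = ε * π ^ 4 * (2 * p + 2) := by ring

theorem helical_part_energy_general {p σ ε : ℝ} (hp : 0 ≤ p) (hσ : σ ^ 2 = 1) (hε : 0 < ε) :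
    let h := helix (ε ^ 2) σ fun t => π * softRamp p (t / ε)
    ContDiff ℝ 1 h ∧
    (∀ t : ℝ, t ≠ p * ε → t ≠ (p + 1) * ε →
      DifferentiableAt ℝ (deriv h) t ∧
      ‖deriv (deriv h) t‖ ^ 2 =
        π ^ 4 * deriv (softRamp p) (t / ε) ^ 4 +
          π ^ 2 * deriv (deriv (softRamp p)) (t / ε) ^ 2) ∧
    (∫ t in (0 : ℝ)..((p + 1) * ε), ‖deriv (deriv h) t‖ ^ 2) ≤
      ε * π ^ 2 * (π ^ 2 * (p + 1 / 5) + (p + 1)) ∧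
    ε * π ^ 2 * (π ^ 2 * (p + 1 / 5) + (p + 1)) < ε * π ^ 4 * (2 * p + 2) := by
  intro h
  have hφ : ContDiff ℝ 1 (softRamp p) := contDiff_softRamp p
  have hφd : Differentiable ℝ (softRamp p) := hφ.differentiable one_ne_zero
  have hθ : ContDiff ℝ 1 fun t => π * softRamp p (t / ε) := by fun_prop
  refine ⟨contDiff_helix hθ, fun t htp htq => ?_, ?_, helical_energy_bound_lt hp hε⟩
  · have hφ' : DifferentiableAt ℝ (deriv (softRamp p)) (t / ε) :=
      (hasDerivAt_deriv_softRamp (by rwa [ne_eq, div_eq_iff hε.ne'])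
        (by rwa [ne_eq, div_eq_iff hε.ne'])).differentiableAt
    exact ⟨(hasDerivAt_deriv_helix (hθ.differentiable one_ne_zero)
      (differentiableAt_deriv_const_mul_comp_div π hφ')).differentiableAt,
      norm_sq_deriv_deriv_helix_rescaled hσ hε.ne' hφd hφ'⟩
  · refine (integral_norm_sq_deriv_deriv_helix_le (s := {p, p + 1}) (M := 1) hσ hε hφ
      (toFinite _).countable (fun x hx => ?_) (by linarith)).trans_eq ?_
    · obtain ⟨hxp, hxq⟩ : x ≠ p ∧ x ≠ p + 1 := by simpa using hx
      exact ⟨(hasDerivAt_deriv_softRamp hxp hxq).differentiableAt,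
        sq_deriv_deriv_softRamp_le_one hxp hxq⟩
    · rw [integral_deriv_softRamp_pow hp]
      push_cast
      ring

/-- **Bending energy of the helical part.** For odd `b ≥ 3` and `ε > 0`,
the helix `h^ε` is continuously differentiable on `[0, ∞)`, twice differentiable outside
`{(b-1)ε/2, (b+1)ε/2}` with `‖(h^ε)''(t)‖² = π⁴·φ'(t/ε)⁴ + π²·φ''(t/ε)²` there, and
`∫₀^{(b+1)ε/2} ‖(h^ε)''‖² ≤ ε·π²·(π²·((b-1)/2 + 1/5) + (b+1)/2) < ε·π⁴·(b+1)`. -/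
theorem helical_part_energy (b : ℕ) (hb : Odd b) (hb3 : 3 ≤ b) (ε : ℝ) (hε : 0 < ε) :
    ContDiffOn ℝ 1 (hel b ε) (Ici 0) ∧
    (∀ t : ℝ, 0 < t → t ≠ ((b : ℝ) - 1) * ε / 2 → t ≠ ((b : ℝ) + 1) * ε / 2 →
      DifferentiableAt ℝ (deriv (hel b ε)) t ∧
      ‖deriv (deriv (hel b ε)) t‖ ^ 2 =
        π ^ 4 * (deriv (phi b) (t / ε)) ^ 4 + π ^ 2 * (deriv (deriv (phi b)) (t / ε)) ^ 2) ∧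
    (∫ t in (0 : ℝ)..(((b : ℝ) + 1) * ε / 2), ‖deriv (deriv (hel b ε)) t‖ ^ 2) ≤
      ε * π ^ 2 * (π ^ 2 * (((b : ℝ) - 1) / 2 + 1 / 5) + ((b : ℝ) + 1) / 2) ∧
    ε * π ^ 2 * (π ^ 2 * (((b : ℝ) - 1) / 2 + 1 / 5) + ((b : ℝ) + 1) / 2) <
      ε * π ^ 4 * ((b : ℝ) + 1) := by
  have hb1 : (3 : ℝ) ≤ b := mod_cast hb3
  have hq : ((b : ℝ) - 1) / 2 + 1 = (b + 1) / 2 := by ring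
  have hσ : ((-1 : ℝ) ^ ((b - 1) / 2)) ^ 2 = 1 := by rw [pow_right_comm, neg_one_sq, one_pow]
  have key := helical_part_energy_general (p := ((b : ℝ) - 1) / 2) (by linarith) hσ hε
  simp only [← hel_eq_helix, ← phi_eq_softRamp, hq, div_mul_eq_mul_div] at key
  obtain ⟨hC, hdd, hint, hlt⟩ := key
  exact ⟨hC.contDiffOn, fun t _ => hdd t, hint, hlt.trans_eq (by ring)⟩
end
end
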